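/- Let K = V diag(ω) Vᵀ with V ∈ ℝ^{n×n} orthogonal and all eigenvalues ω_j > 0 (so K has full rank n), and let Y ∈ ℝ^{n×C}. Then for every i and k, as λ → 0⁺ the leave-one-out residual Δ^λ_{ik} = (Y_{ik} − (K(K+λI)⁻¹Y)_{ik})/(1 − (K(K+λI)⁻¹)_{ii}) converges to Δ_{ik} = Σ_{l=1}^n Y_{lk} · (Σ_{j=1}^n (1/ω_j) V_{ij}V_{lj}) / (Σ_{j=1}^n (1/ω_j) V_{ij}²), and the denominator Σ_{j=1}^n (1/ω_j)V_{ij}² is strictly positive. -/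

import Mathlib

open Matrix Finset Filter

/-!
Since `1 - K (K + lam)⁻¹ = lam (K + lam)⁻¹`, the factor `lam` cancels from the leave-one-out
residual, which becomes `((K + lam)⁻¹ Y)ᵢₖ / ((K + lam)⁻¹)ᵢᵢ`. Matrix inversion is continuous at an
invertible `K`, so the limit is `(K⁻¹ Y)ᵢₖ / (K⁻¹)ᵢᵢ`, and a diagonalization of `K` gives the
entries of `K⁻¹`.
-/

open scoped Topology

section Ridge

variable {ι κ 𝕜 : Type*} [Fintype ι] [DecidableEq ι]

/-- The smoother matrix of kernel ridge regression with kernel matrix `K` and regularization `lam`: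
it sends the targets to the fitted values. -/
noncomputable def ridgeSmoother [CommRing 𝕜] (K : Matrix ι ι 𝕜) (lam : 𝕜) : Matrix ι ι 𝕜 :=
  K * (K + lam • (1 : Matrix ι ι 𝕜))⁻¹

/-- The leave-one-out residual of kernel ridge regression at the point `i` in the output
coordinate `k`, given by the closed form in terms of the smoother rather than by refitting
without `i`. For invertible `K` it is the junk value `0 / 0 = 0` at `lam = 0`, so its limits are
taken along punctured neighbourhoods. -/
noncomputable def looResidual [Field 𝕜] (K : Matrix ι ι 𝕜) (Y : Matrix ι κ 𝕜) (lam : 𝕜)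
    (i : ι) (k : κ) : 𝕜 :=
  (Y i k - (ridgeSmoother K lam * Y) i k) / (1 - ridgeSmoother K lam i i)

theorem one_sub_ridgeSmoother [CommRing 𝕜] {K : Matrix ι ι 𝕜} {lam : 𝕜}
    (h : IsUnit (K + lam • (1 : Matrix ι ι 𝕜)).det) :
    1 - ridgeSmoother K lam = lam • (K + lam • (1 : Matrix ι ι 𝕜))⁻¹ := by
  set R := (K + lam • (1 : Matrix ι ι 𝕜))⁻¹ with hR
  have hsplit : K * R + lam • R = 1 := by
    rw [← mul_nonsing_inv _ h, ← hR, add_mul, smul_mul, one_mul]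
  exact sub_eq_iff_eq_add'.mpr hsplit.symm

theorem looResidual_eq_inv_mul_div_inv [Field 𝕜] {K : Matrix ι ι 𝕜} {lam : 𝕜} (hlam : lam ≠ 0)
    (h : IsUnit (K + lam • (1 : Matrix ι ι 𝕜)).det) (Y : Matrix ι κ 𝕜) (i : ι) (k : κ) :
    looResidual K Y lam i k =
      ((K + lam • (1 : Matrix ι ι 𝕜))⁻¹ * Y) i k / (K + lam • (1 : Matrix ι ι 𝕜))⁻¹ i i := by
  have numerator : Y i k - (ridgeSmoother K lam * Y) i k =
      lam * ((K + lam • (1 : Matrix ι ι 𝕜))⁻¹ * Y) i k := by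
    rw [← Matrix.sub_apply, ← smul_eq_mul, ← Matrix.smul_apply, ← Matrix.smul_mul,
      ← one_sub_ridgeSmoother h, Matrix.sub_mul, Matrix.one_mul]
  have denominator : 1 - ridgeSmoother K lam i i =
      lam * (K + lam • (1 : Matrix ι ι 𝕜))⁻¹ i i := by
    rw [← smul_eq_mul, ← Matrix.smul_apply, ← one_sub_ridgeSmoother h, Matrix.sub_apply,
      one_apply_eq]
  rw [looResidual, numerator, denominator, mul_div_mul_left _ _ hlam]

section Limit

variable [Field 𝕜] [TopologicalSpace 𝕜] [IsTopologicalRing 𝕜]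

theorem eventually_isUnit_det_add_smul_one [T1Space 𝕜] {K : Matrix ι ι 𝕜} (hK : IsUnit K.det) :
    ∀ᶠ lam : 𝕜 in 𝓝 0, IsUnit (K + lam • (1 : Matrix ι ι 𝕜)).det := by
  have hcont : Continuous fun lam : 𝕜 => (K + lam • (1 : Matrix ι ι 𝕜)).det := by fun_prop
  have hdet : (K + (0 : 𝕜) • (1 : Matrix ι ι 𝕜)).det ≠ 0 := by simpa using hK.ne_zero
  simpa only [isUnit_iff_ne_zero] using hcont.continuousAt.eventually_ne hdet

variable [ContinuousInv₀ 𝕜] {K : Matrix ι ι 𝕜}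

theorem tendsto_inv_add_smul_one (hK : IsUnit K.det) :
    Tendsto (fun lam : 𝕜 => (K + lam • (1 : Matrix ι ι 𝕜))⁻¹) (𝓝 0) (𝓝 K⁻¹) := by
  have hinv : ContinuousAt Inv.inv K := continuousAt_matrix_inv K <| by
    simpa only [Ring.inverse_eq_inv'] using continuousAt_inv₀ hK.ne_zero
  have hshift : Tendsto (fun lam : 𝕜 => K + lam • (1 : Matrix ι ι 𝕜)) (𝓝 0) (𝓝 K) :=
    Continuous.tendsto' (by fun_prop) _ _ (by simp)
  exact hinv.tendsto.comp hshift

theorem tendsto_looResidual_of_isUnit_det [T1Space 𝕜] (hK : IsUnit K.det) (Y : Matrix ι κ 𝕜)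
    {i : ι} (hi : K⁻¹ i i ≠ 0) (k : κ) :
    Tendsto (fun lam : 𝕜 => looResidual K Y lam i k) (𝓝[≠] 0)
      (𝓝 ((K⁻¹ * Y) i k / K⁻¹ i i)) := by
  have hinv := (tendsto_inv_add_smul_one hK).mono_left (nhdsWithin_le_nhds (s := {0}ᶜ))
  have hmulY : Continuous fun A : Matrix ι ι 𝕜 => (A * Y) i k := by fun_prop
  have hdiag : Continuous fun A : Matrix ι ι 𝕜 => A i i := by fun_prop
  refine (((hmulY.tendsto _).comp hinv).div ((hdiag.tendsto _).comp hinv) hi).congr' ?_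
  filter_upwards [self_mem_nhdsWithin,
    nhdsWithin_le_nhds (eventually_isUnit_det_add_smul_one hK)] with lam hlam hunit
  exact (looResidual_eq_inv_mul_div_inv hlam hunit Y i k).symm

end Limit

end Ridge

section Diagonalization

theorem mul_diagonal_mul_apply {m ι n R : Type*} [Fintype ι] [DecidableEq ι] [CommSemiring R]
    (V : Matrix m ι R) (d : ι → R) (W : Matrix ι n R) (i : m) (l : n) :
    (V * diagonal d * W) i l = ∑ j, d j * (V i j * W j l) := by
  rw [mul_apply]
  exact sum_congr rfl fun j _ => by rw [mul_diagonal, mul_comm (V i j), mul_assoc]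

theorem row_ne_zero_of_mul_eq_one {m ι R : Type*} [Fintype ι] [DecidableEq m] [Semiring R]
    [Nontrivial R] {V : Matrix m ι R} {W : Matrix ι m R} (hVW : V * W = 1) (i : m) : V i ≠ 0 := by
  intro hrow
  have hentry : (V * W) i i = 1 := by rw [hVW, one_apply_eq]
  exact zero_ne_one (by simpa only [mul_apply', hrow, zero_dotProduct] using hentry)

variable {ι 𝕜 : Type*} [Fintype ι] [DecidableEq ι] [Field 𝕜] {V W : Matrix ι ι 𝕜} {ω : ι → 𝕜}

theorem mul_diagonal_mul_mul_one_div_eq_one (hVW : V * W = 1) (hω : ∀ j, ω j ≠ 0) :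
    V * diagonal ω * W * (V * diagonal (fun j => 1 / ω j) * W) = 1 := by
  have hdiag : diagonal ω * diagonal (fun j => 1 / ω j) = 1 := by
    simp only [diagonal_mul_diagonal, mul_one_div_cancel (hω _), diagonal_one]
  calc V * diagonal ω * W * (V * diagonal (fun j => 1 / ω j) * W)
      = V * (diagonal ω * (W * V) * diagonal (fun j => 1 / ω j)) * W := by
        simp only [Matrix.mul_assoc]
    _ = 1 := by rw [mul_eq_one_comm.mp hVW, mul_one, hdiag, mul_one, hVW]

end Diagonalization

theorem sum_mul_sq_pos {ι 𝕜 : Type*} [Fintype ι] [CommRing 𝕜] [LinearOrder 𝕜]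
    [IsStrictOrderedRing 𝕜] {w v : ι → 𝕜} (hw : ∀ j, 0 < w j) (hv : v ≠ 0) :
    0 < ∑ j, w j * v j ^ 2 := by
  obtain ⟨j, hj⟩ := Function.ne_iff.mp hv
  exact sum_pos' (fun j _ => mul_nonneg (hw j).le (sq_nonneg (v j)))
    ⟨j, mem_univ j, mul_pos (hw j) (sq_pos_of_ne_zero hj)⟩

theorem loo_residual_zero_reg_limit_full_rank_general {ι κ 𝕜 : Type*} [Fintype ι] [DecidableEq ι]
    [Field 𝕜] [TopologicalSpace 𝕜] [IsTopologicalDivisionRing 𝕜] [T1Space 𝕜]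
    {V W : Matrix ι ι 𝕜} (hVW : V * W = 1) {ω : ι → 𝕜} (hω : ∀ j, ω j ≠ 0)
    (Y : Matrix ι κ 𝕜) {i : ι} (hi : ∑ j, (1 / ω j) * (V i j * W j i) ≠ 0) (k : κ) :
    Tendsto (fun lam : 𝕜 => looResidual (V * diagonal ω * W) Y lam i k) (𝓝[≠] 0)
      (𝓝 (∑ l, Y l k * ((∑ j, (1 / ω j) * (V i j * W j l)) /
        (∑ j, (1 / ω j) * (V i j * W j i))))) := by
  have hmul := mul_diagonal_mul_mul_one_div_eq_one hVW hω
  have hinv (l : ι) : (V * diagonal ω * W)⁻¹ i l = ∑ j, (1 / ω j) * (V i j * W j l) := by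
    rw [inv_eq_right_inv hmul, mul_diagonal_mul_apply]
  have hlim := tendsto_looResidual_of_isUnit_det (isUnit_det_of_right_inverse hmul) Y
    ((hinv i).trans_ne hi) k
  simpa only [mul_apply, hinv, sum_div, mul_comm, mul_div_assoc] using hlim

/-- **Zero-regularization limit of the leave-one-out residual, full-rank case.**
For `K = V diag(ω) Vᵀ` with `V` orthogonal and all eigenvalues `ω j > 0`
(full rank) and targets `Y`, the denominator `∑ j (1/ω j) V i j ²` is strictly
positive and the ridge leave-one-out residual converges, as `lam → 0⁺`, to
`∑ l, Y l k (∑ j (1/ω j) V i j V l j)/(∑ j (1/ω j) V i j ²)`. -/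
theorem loo_residual_zero_reg_limit_full_rank
    (n C : ℕ)
    (V : Matrix (Fin n) (Fin n) ℝ) (hV : V ∈ Matrix.orthogonalGroup (Fin n) ℝ)
    (ω : Fin n → ℝ) (hω : ∀ j : Fin n, 0 < ω j)
    (Y : Matrix (Fin n) (Fin C) ℝ)
    (K : Matrix (Fin n) (Fin n) ℝ) (hK : K = V * Matrix.diagonal ω * Vᵀ)
    (Δ : ℝ → Fin n → Fin C → ℝ)
    (hΔ : ∀ (lam : ℝ) (i : Fin n) (k : Fin C),
      Δ lam i k =
        (Y i k - (K * (K + lam • (1 : Matrix (Fin n) (Fin n) ℝ))⁻¹ * Y) i k) /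
          (1 - (K * (K + lam • (1 : Matrix (Fin n) (Fin n) ℝ))⁻¹) i i)) :
    ∀ (i : Fin n) (k : Fin C),
      (0 < ∑ j : Fin n, (1 / ω j) * V i j ^ 2) ∧
      Tendsto (fun lam : ℝ => Δ lam i k) (nhdsWithin 0 (Set.Ioi 0))
        (nhds (∑ l : Fin n, Y l k *
          ((∑ j : Fin n, (1 / ω j) * (V i j * V l j)) /
            (∑ j : Fin n, (1 / ω j) * V i j ^ 2)))) := by
  intro i k
  have hVV : V * Vᵀ = 1 := (mem_orthogonalGroup_iff (Fin n) ℝ).mp hV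
  have hpos : 0 < ∑ j, (1 / ω j) * V i j ^ 2 :=
    sum_mul_sq_pos (fun j => one_div_pos.mpr (hω j)) (row_ne_zero_of_mul_eq_one hVV i)
  have hlim := loo_residual_zero_reg_limit_full_rank_general hVV (fun j => (hω j).ne') Y
    (by simpa only [transpose_apply, sq] using hpos.ne') k
  refine ⟨hpos, ?_⟩
  simpa only [hΔ, hK, looResidual, ridgeSmoother, transpose_apply, sq] using
    hlim.mono_left (nhdsGT_le_nhdsNE 0)
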